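/- Suppose t ≥ 4 is an even integer. Then for every real number x > 0, 2/(1 + √(1 + 4x²)) < m⁺(P_{t−4}, x) / m⁺(P_{t−3}, x) ≤ 1. -/

import Mathlib

/-!
Write `f n = m⁺(P_n, x)`. Labelling each edge `{i, i+1}` of a path by its lower endpoint `i` turns
matchings of `P_n` into subsets of `{0, …, n-2}` without two consecutive elements, which gives
`f 0 = f 1 = 1` and `f (n+2) = f (n+1) + x² f n` (splitting on whether the last edge is used).

With `q = (1 + √(1 + 4x²)) / 2`, the positive root of `q² = q + x²`, the recurrence yields
`q f (n+1) - f (n+2) = -(q - 1) (q f n - f (n+1))`. Since `q > 1` and `q f 0 - f 1 = q - 1 > 0`,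
the quantity `q f n - f (n+1)` is positive for even `n`, which is the lower bound. The upper bound
is the monotonicity of `f`.
-/

open Finset

/-- A finite set of edges forms a matching in `G`: every member is an edge of `G` and
the edges are pairwise vertex-disjoint. -/
def IsMatchingSet {V : Type*} (G : SimpleGraph V) (s : Finset (Sym2 V)) : Prop :=
  ↑s ⊆ G.edgeSet ∧ (s : Set (Sym2 V)).Pairwise fun e f => ∀ v, v ∈ e → v ∉ f

/-- `matchNum G k` is the number `m(G,k)` of `k`-matchings of `G`. -/
noncomputable def matchNum {V : Type*} [Fintype V] (G : SimpleGraph V) (k : ℕ) : ℕ :=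
  Nat.card {s : Finset (Sym2 V) // IsMatchingSet G s ∧ s.card = k}

/-- `m⁺(G,x) = ∑_{k=0}^{⌊n/2⌋} m(G,k) x^(2k)`, where `n` is the number of vertices. -/
noncomputable def mPlus {V : Type*} [Fintype V] (G : SimpleGraph V) (x : ℝ) : ℝ :=
  ∑ k ∈ Finset.range (Fintype.card V / 2 + 1), (matchNum G k : ℝ) * x ^ (2 * k)

/-- `m⁺(P_t, x)` for an integer `t`, with the convention `m⁺(P_{-1},x) = 0`
(here `P_t` is the path graph on `t` vertices, `P_0` being the empty graph). -/
noncomputable def mPlusPath (t : ℤ) (x : ℝ) : ℝ :=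
  if 0 ≤ t then mPlus (SimpleGraph.pathGraph t.toNat) x else 0

/-- The subsets of `{0, …, n-2}` without two consecutive elements: these are the sets of lower
endpoints of the matchings of the path on `{0, …, n-1}`. -/
def sparseSets (n : ℕ) : Finset (Finset ℕ) :=
  (range (n - 1)).powerset.filter fun S => ∀ i ∈ S, i + 1 ∉ S

lemma mem_sparseSets {n : ℕ} {S : Finset ℕ} :
    S ∈ sparseSets n ↔ (∀ i ∈ S, i + 1 < n) ∧ ∀ i ∈ S, i + 1 ∉ S := by
  simp only [sparseSets, mem_filter, mem_powerset, subset_iff, mem_range]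
  refine and_congr_left fun _ => ⟨fun h i hi => ?_, fun h i hi => ?_⟩
  · have := h hi
    omega
  · have := h i hi
    omega

/-- The smaller endpoint of an edge, as a natural number. -/
def lowEnd {n : ℕ} : Sym2 (Fin n) → ℕ :=
  Sym2.lift ⟨fun a b => min a.val b.val, fun _ _ => min_comm _ _⟩

lemma mem_edgeSet_pathGraph {n : ℕ} {e : Sym2 (Fin n)} :
    e ∈ (SimpleGraph.pathGraph n).edgeSet ↔
      ∃ (i : ℕ) (h : i + 1 < n), e = s(⟨i, by omega⟩, ⟨i + 1, h⟩) := by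
  induction e with
  | _ a b =>
    rw [SimpleGraph.mem_edgeSet, SimpleGraph.pathGraph_adj]
    constructor
    · rintro (h | h)
      · exact ⟨a, by omega, by simp [h]⟩
      · exact ⟨b, by omega, by simp [Fin.ext_iff, h]⟩
    · rintro ⟨i, h, he⟩
      simp only [Sym2.eq_iff, Fin.ext_iff] at he
      omega

lemma lowEnd_edge {n i : ℕ} (h : i + 1 < n) :
    lowEnd (s(⟨i, by omega⟩, ⟨i + 1, h⟩) : Sym2 (Fin n)) = i := by
  simp [lowEnd]

lemma lowEnd_injOn (n : ℕ) : Set.InjOn lowEnd (SimpleGraph.pathGraph n).edgeSet := by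
  intro e he f hf h
  obtain ⟨i, hi, rfl⟩ := mem_edgeSet_pathGraph.1 he
  obtain ⟨j, hj, rfl⟩ := mem_edgeSet_pathGraph.1 hf
  rw [lowEnd_edge, lowEnd_edge] at h
  subst h
  rfl

lemma isMatchingSet_pathGraph_iff {n : ℕ} {s : Finset (Sym2 (Fin n))}
    (hs : ↑s ⊆ (SimpleGraph.pathGraph n).edgeSet) :
    IsMatchingSet (SimpleGraph.pathGraph n) s ↔ s.image lowEnd ∈ sparseSets n := by
  rw [mem_sparseSets]
  constructor
  · rintro ⟨-, hp⟩
    simp only [mem_image, forall_exists_index, and_imp]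
    refine ⟨?_, ?_⟩
    · rintro _ e he rfl
      obtain ⟨i, hi, rfl⟩ := mem_edgeSet_pathGraph.1 (hs he)
      rwa [lowEnd_edge]
    · rintro _ e he rfl ⟨f, hf, hef⟩
      obtain ⟨i, hi, rfl⟩ := mem_edgeSet_pathGraph.1 (hs he)
      obtain ⟨j, hj, rfl⟩ := mem_edgeSet_pathGraph.1 (hs hf)
      rw [lowEnd_edge, lowEnd_edge] at hef
      subst hef
      refine hp he hf ?_ ⟨i + 1, hi⟩ (by simp) (by simp)
      simp only [ne_eq, Sym2.eq_iff, Fin.ext_iff]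
      omega
  · rintro ⟨-, h⟩
    refine ⟨hs, fun e he f hf hne v hve hvf => ?_⟩
    have h1 := h _ (mem_image_of_mem lowEnd he)
    have h2 := h _ (mem_image_of_mem lowEnd hf)
    have he' := mem_image_of_mem lowEnd he
    have hf' := mem_image_of_mem lowEnd hf
    have hl : lowEnd e ≠ lowEnd f := fun h => hne (lowEnd_injOn n (hs he) (hs hf) h)
    obtain ⟨i, hi, rfl⟩ := mem_edgeSet_pathGraph.1 (hs he)
    obtain ⟨j, hj, rfl⟩ := mem_edgeSet_pathGraph.1 (hs hf)
    simp only [lowEnd_edge] at h1 h2 he' hf' hl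
    simp only [Sym2.mem_iff, Fin.ext_iff] at hve hvf
    have : j = i + 1 ∨ i = j + 1 := by omega
    rcases this with rfl | rfl
    · exact h1 hf'
    · exact h2 he'

lemma matchNum_pathGraph (n k : ℕ) :
    matchNum (SimpleGraph.pathGraph n) k = #{S ∈ sparseSets n | #S = k} := by
  classical
  rw [matchNum, Nat.card_eq_fintype_card, Fintype.card_subtype]
  refine card_bij (fun s _ => s.image lowEnd) ?_ ?_ ?_
  · intro s hs
    simp only [mem_filter, mem_univ, true_and] at hs ⊢
    refine ⟨(isMatchingSet_pathGraph_iff hs.1.1).1 hs.1, ?_⟩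
    rw [card_image_of_injOn ((lowEnd_injOn n).mono hs.1.1), hs.2]
  · intro s hs s' hs' h
    simp only [mem_filter, mem_univ, true_and] at hs hs'
    rw [← coe_inj, coe_image, coe_image] at h
    exact coe_injective (((lowEnd_injOn n).image_eq_image_iff hs.1.1 hs'.1.1).1 h)
  · intro S hS
    rw [mem_filter] at hS
    obtain ⟨hS, hk⟩ := hS
    -- The preimage consists of the edges whose lower endpoint lies in `S`.
    let s : Finset (Sym2 (Fin n)) :=
      {e | e ∈ (SimpleGraph.pathGraph n).edgeSet ∧ lowEnd e ∈ S}
    have hs : ↑s ⊆ (SimpleGraph.pathGraph n).edgeSet := fun e he => by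
      simp only [s, coe_filter, mem_univ, true_and, Set.mem_ofPred_eq] at he
      exact he.1
    have him : s.image lowEnd = S := by
      ext i
      simp only [s, mem_image, mem_filter, mem_univ, true_and]
      constructor
      · rintro ⟨e, ⟨-, he⟩, rfl⟩
        exact he
      · intro hi
        have hin := (mem_sparseSets.1 hS).1 i hi
        refine ⟨_, ⟨mem_edgeSet_pathGraph.2 ⟨i, hin, rfl⟩, ?_⟩, lowEnd_edge hin⟩
        rwa [lowEnd_edge]
    refine ⟨s, ?_, him⟩
    simp only [mem_filter, mem_univ, true_and]
    refine ⟨(isMatchingSet_pathGraph_iff hs).2 (him ▸ hS), ?_⟩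
    rw [← hk, ← him, card_image_of_injOn ((lowEnd_injOn n).mono hs)]

/-- A sparse set and its translate by one are disjoint in `{0, …, n-1}`, so the sum defining
`mPlus` omits no matching. -/
lemma card_le_of_mem_sparseSets {n : ℕ} {S : Finset ℕ} (hS : S ∈ sparseSets n) :
    #S ≤ n / 2 := by
  obtain ⟨h1, h2⟩ := mem_sparseSets.1 hS
  have hd : Disjoint S (S.image (· + 1)) := by
    rw [disjoint_left]
    intro i hi hi'
    obtain ⟨j, hj, rfl⟩ := mem_image.1 hi'
    exact h2 j hj hi
  have hsub : S ∪ S.image (· + 1) ⊆ range n := by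
    intro i hi
    rcases mem_union.1 hi with hi | hi
    · have := h1 i hi
      exact mem_range.2 (by omega)
    · obtain ⟨j, hj, rfl⟩ := mem_image.1 hi
      exact mem_range.2 (h1 j hj)
  have hc := card_le_card hsub
  rw [card_union_of_disjoint hd, card_image_of_injective _ (add_left_injective 1),
    card_range] at hc
  omega

lemma mPlus_pathGraph (n : ℕ) (x : ℝ) :
    mPlus (SimpleGraph.pathGraph n) x = ∑ S ∈ sparseSets n, x ^ (2 * #S) := by
  rw [mPlus, Fintype.card_fin, ← sum_fiberwise_of_maps_to (g := card)
    (t := range (n / 2 + 1)) (fun S hS => mem_range.2 (by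
      have := card_le_of_mem_sparseSets hS; omega))]
  refine sum_congr rfl fun k _ => ?_
  rw [matchNum_pathGraph, sum_congr rfl (g := fun _ => x ^ (2 * k)), sum_const, nsmul_eq_mul]
  intro S hS
  rw [(mem_filter.1 hS).2]

lemma mPlus_pathGraph_zero (x : ℝ) : mPlus (SimpleGraph.pathGraph 0) x = 1 := by
  rw [mPlus_pathGraph, show sparseSets 0 = {∅} by decide]
  simp

lemma mPlus_pathGraph_one (x : ℝ) : mPlus (SimpleGraph.pathGraph 1) x = 1 := by
  rw [mPlus_pathGraph, show sparseSets 1 = {∅} by decide]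
  simp

lemma mPlus_pathGraph_add_two (n : ℕ) (x : ℝ) :
    mPlus (SimpleGraph.pathGraph (n + 2)) x =
      mPlus (SimpleGraph.pathGraph (n + 1)) x + x ^ 2 * mPlus (SimpleGraph.pathGraph n) x := by
  simp only [mPlus_pathGraph]
  -- The label `n` stands for the last edge of the path on `n + 2` vertices.
  rw [← sum_filter_not_add_sum_filter (sparseSets (n + 2)) (fun S => n ∈ S)]
  have hnot : ∀ S ∈ sparseSets n, n ∉ S := fun S hS hn => by
    have := (mem_sparseSets.1 hS).1 n hn
    omega
  congr 1
  · refine sum_congr ?_ fun _ _ => rfl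
    ext S
    simp only [mem_filter, mem_sparseSets]
    constructor
    · rintro ⟨⟨h1, h2⟩, hn⟩
      refine ⟨fun i hi => ?_, h2⟩
      have := h1 i hi
      have : i ≠ n := fun h => hn (h ▸ hi)
      omega
    · rintro ⟨h1, h2⟩
      refine ⟨⟨fun i hi => ?_, h2⟩, fun hn => ?_⟩
      · have := h1 i hi
        omega
      · have := h1 n hn
        omega
  · rw [mul_sum]
    symm
    refine sum_bij (fun S _ => insert n S) ?_ ?_ ?_ ?_
    · intro S hS
      obtain ⟨h1, h2⟩ := mem_sparseSets.1 hS
      refine mem_filter.2 ⟨mem_sparseSets.2 ⟨fun i hi => ?_, fun i hi hi' => ?_⟩,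
        mem_insert_self _ _⟩
      · rcases mem_insert.1 hi with rfl | hi
        · omega
        · have := h1 i hi
          omega
      · rcases mem_insert.1 hi with rfl | hi <;> rcases mem_insert.1 hi' with h | hi'
        · omega
        · have := h1 _ hi'
          omega
        · have := h1 i hi
          omega
        · exact h2 i hi hi'
    · intro S hS T hT h
      rw [← erase_insert (hnot S hS), h, erase_insert (hnot T hT)]
    · intro T hT
      obtain ⟨hT, hn⟩ := mem_filter.1 hT
      obtain ⟨h1, h2⟩ := mem_sparseSets.1 hT
      refine ⟨T.erase n, mem_sparseSets.2 ⟨fun i hi => ?_, fun i hi hi' => ?_⟩,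
        insert_erase hn⟩
      · obtain ⟨hne, hi⟩ := mem_erase.1 hi
        have := h1 i hi
        have : i + 1 ≠ n := fun h => h2 i hi (h ▸ hn)
        omega
      · exact h2 i (mem_of_mem_erase hi) (mem_of_mem_erase hi')
    · intro S hS
      rw [card_insert_of_notMem (hnot S hS)]
      ring

lemma mPlus_pathGraph_pos (x : ℝ) (n : ℕ) :
    0 < mPlus (SimpleGraph.pathGraph n) x ∧
      mPlus (SimpleGraph.pathGraph n) x ≤ mPlus (SimpleGraph.pathGraph (n + 1)) x := by
  induction n with
  | zero => rw [zero_add, mPlus_pathGraph_zero, mPlus_pathGraph_one]; norm_num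
  | succ n ih =>
    refine ⟨ih.1.trans_le ih.2, ?_⟩
    rw [mPlus_pathGraph_add_two]
    have := mul_nonneg (sq_nonneg x) ih.1.le
    linarith

/-- Two steps of the recurrence multiply `q f n - f (n+1)` by `(q - 1)²`. -/
lemma mPlus_pathGraph_even_lt {x q : ℝ} (hq : 1 < q) (hqx : q ^ 2 = q + x ^ 2) (m : ℕ) :
    mPlus (SimpleGraph.pathGraph (2 * m + 1)) x <
      q * mPlus (SimpleGraph.pathGraph (2 * m)) x := by
  induction m with
  | zero => simpa [mPlus_pathGraph_zero, mPlus_pathGraph_one] using hq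
  | succ m ih =>
    rw [show 2 * (m + 1) + 1 = 2 * m + 1 + 2 by ring, show 2 * (m + 1) = 2 * m + 2 by ring,
      mPlus_pathGraph_add_two (2 * m + 1), show 2 * m + 1 + 1 = 2 * m + 2 by ring,
      mPlus_pathGraph_add_two (2 * m)]
    have hx2 : x ^ 2 = q ^ 2 - q := by linarith
    rw [hx2, ← sub_pos]
    have := mul_pos (pow_pos (sub_pos.2 hq) 2) (sub_pos.2 ih)
    refine this.trans_eq ?_
    ring

theorem stmt7 (t : ℤ) (ht : 4 ≤ t) (hte : Even t) (x : ℝ) (hx : 0 < x) :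
    2 / (1 + Real.sqrt (1 + 4 * x ^ 2)) < mPlusPath (t - 4) x / mPlusPath (t - 3) x ∧
    mPlusPath (t - 4) x / mPlusPath (t - 3) x ≤ 1 := by
  obtain ⟨m, rfl⟩ : ∃ m : ℕ, t = 2 * m + 4 := by
    obtain ⟨r, rfl⟩ := hte
    exact ⟨(r - 2).toNat, by omega⟩
  have e1 : mPlusPath (2 * m + 4 - 4) x = mPlus (SimpleGraph.pathGraph (2 * m)) x := by
    rw [mPlusPath, if_pos (by omega), show (2 * (m : ℤ) + 4 - 4).toNat = 2 * m by omega]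
  have e2 : mPlusPath (2 * m + 4 - 3) x = mPlus (SimpleGraph.pathGraph (2 * m + 1)) x := by
    rw [mPlusPath, if_pos (by omega), show (2 * (m : ℤ) + 4 - 3).toNat = 2 * m + 1 by omega]
  rw [e1, e2]
  have hpos := (mPlus_pathGraph_pos x (2 * m + 1)).1
  refine ⟨?_, (div_le_one hpos).2 (mPlus_pathGraph_pos x (2 * m)).2⟩
  have hr : Real.sqrt (1 + 4 * x ^ 2) ^ 2 = 1 + 4 * x ^ 2 := Real.sq_sqrt (by positivity)
  have hr1 : 1 < Real.sqrt (1 + 4 * x ^ 2) := by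
    rw [Real.lt_sqrt (by norm_num)]
    nlinarith [pow_pos hx 2]
  have key := mPlus_pathGraph_even_lt (x := x) (q := (1 + Real.sqrt (1 + 4 * x ^ 2)) / 2)
    (by linarith) (by linarith) m
  rw [div_lt_div_iff₀ (by linarith) hpos]
  linarith
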